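/- arXiv:2405.16463 — 2 statements merged into one kernel-verified Lean document; each statement's English description precedes it below -/
import Mathlib

section
/- (Massey's conservation law.) Let X^m and Y^m be jointly distributed random variables taking values in finite sets. Then I(X^m; Y^m) = I(X^m → Y^m) + I(D^1 ∘ Y^m → X^m), i.e., mutual information decomposes into the directed information from X to Y plus the one-step delayed directed information from Y to X. -/
open MeasureTheory Finset

variable {Ω : Type*} [MeasurableSpace Ω]

/-- Shannon entropy of a random variable `W` with values in a finite set:
`H(W) = -∑ w, P(W = w) log P(W = w)`. -/
noncomputable def entropy (μ : Measure Ω) {α : Type*} [Fintype α] (W : Ω → α) : ℝ :=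
  -∑ w : α, (μ (W ⁻¹' {w})).toReal * Real.log (μ (W ⁻¹' {w})).toReal

/-- Conditional entropy `H(W | V) = H(W, V) - H(V)`. -/
noncomputable def condEntropy (μ : Measure Ω) {α β : Type*} [Fintype α] [Fintype β]
    (W : Ω → α) (V : Ω → β) : ℝ :=
  entropy μ (fun ω => (W ω, V ω)) - entropy μ V

/-- Conditional mutual information `I(A; B | C) = H(A|C) + H(B|C) - H(A,B|C)`. -/
noncomputable def condMI (μ : Measure Ω) {α β γ : Type*} [Fintype α] [Fintype β] [Fintype γ]
    (A : Ω → α) (B : Ω → β) (C : Ω → γ) : ℝ :=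
  condEntropy μ A C + condEntropy μ B C - condEntropy μ (fun ω => (A ω, B ω)) C

/-- Mutual information `I(A; B) = H(A) + H(B) - H(A,B)`. -/
noncomputable def mutualInfo (μ : Measure Ω) {α β : Type*} [Fintype α] [Fintype β]
    (A : Ω → α) (B : Ω → β) : ℝ :=
  entropy μ A + entropy μ B - entropy μ (fun ω => (A ω, B ω))

/-- The prefix `X^i = (X_1, …, X_i)` of the sequence `X` (1-based indexing);
`X^0` is the empty (constant) random variable. -/
def pref {𝒳 : Type*} (X : ℕ → Ω → 𝒳) (i : ℕ) : Ω → (Fin i → 𝒳) :=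
  fun ω t => X (t.1 + 1) ω

/-- The InfoMat entry `I_{i,j} = I(X_i; Y_j | X^{i-1}, Y^{j-1})`. -/
noncomputable def infoMat (μ : Measure Ω) {𝒳 𝒴 : Type*} [Fintype 𝒳] [Fintype 𝒴]
    (X : ℕ → Ω → 𝒳) (Y : ℕ → Ω → 𝒴) (i j : ℕ) : ℝ :=
  condMI μ (X i) (Y j) (fun ω => (pref X (i - 1) ω, pref Y (j - 1) ω))

/-- Directed information `I(X^m → Y^m) = ∑_{i=1}^m I(X^i; Y_i | Y^{i-1})`. -/
noncomputable def directedInfo (μ : Measure Ω) {𝒳 𝒴 : Type*} [Fintype 𝒳] [Fintype 𝒴]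
    (m : ℕ) (X : ℕ → Ω → 𝒳) (Y : ℕ → Ω → 𝒴) : ℝ :=
  ∑ i ∈ Finset.Icc 1 m, condMI μ (pref X i) (Y i) (pref Y (i - 1))

/-- `k`-step delayed directed information
`I(D^k ∘ X^m → Y^m) = ∑_{i=k+1}^m I(X^{i-k}; Y_i | Y^{i-1})`. -/
noncomputable def delayedDI (μ : Measure Ω) {𝒳 𝒴 : Type*} [Fintype 𝒳] [Fintype 𝒴]
    (m k : ℕ) (X : ℕ → Ω → 𝒳) (Y : ℕ → Ω → 𝒴) : ℝ :=
  ∑ i ∈ Finset.Icc (k + 1) m, condMI μ (pref X (i - k)) (Y i) (pref Y (i - 1))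

/-- Instantaneous information `I_inst(X^m, Y^m) = ∑_{i=1}^m I(X_i; Y_i | X^{i-1}, Y^{i-1})`. -/
noncomputable def instInfo (μ : Measure Ω) {𝒳 𝒴 : Type*} [Fintype 𝒳] [Fintype 𝒴]
    (m : ℕ) (X : ℕ → Ω → 𝒳) (Y : ℕ → Ω → 𝒴) : ℝ :=
  ∑ i ∈ Finset.Icc 1 m, infoMat μ X Y i i

variable {𝒳 𝒴 : Type*} [Fintype 𝒳] [MeasurableSpace 𝒳] [MeasurableSingletonClass 𝒳]
  [Fintype 𝒴] [MeasurableSpace 𝒴] [MeasurableSingletonClass 𝒴]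

theorem entropy_equiv (μ : Measure Ω) {α β : Type*} [Fintype α] [Fintype β] (e : α ≃ β)
    (W : Ω → α) (V : Ω → β) (h : ∀ ω, e (W ω) = V ω) : entropy μ V = entropy μ W := by
  unfold entropy
  rw [← e.sum_comp]
  have : ∀ a, V ⁻¹' {e a} = W ⁻¹' {a} := by
    intro a
    ext ω
    simp [← h]
  simp only [this]

theorem snoc_pref {α : Type*} (X : ℕ → Ω → α) (n : ℕ) (ω : Ω) :
    (Fin.snocEquiv (fun _ : Fin (n + 1) => α)) (X (n + 1) ω, pref X n ω) = pref X (n + 1) ω := by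
  funext t
  refine Fin.lastCases ?_ (fun t => ?_) t
  · simp [Fin.snocEquiv, pref]
  · simp [Fin.snocEquiv, pref]

theorem entropy_swap (μ : Measure Ω) {α β : Type*} [Fintype α] [Fintype β]
    (A : Ω → α) (B : Ω → β) :
    entropy μ (fun ω => (A ω, B ω)) = entropy μ (fun ω => (B ω, A ω)) :=
  entropy_equiv μ (Equiv.prodComm β α) _ _ (fun _ => rfl)

theorem entropy_pref_succ (μ : Measure Ω) {α : Type*} [Fintype α] (X : ℕ → Ω → α) (n : ℕ) :
    entropy μ (fun ω => (X (n + 1) ω, pref X n ω)) = entropy μ (pref X (n + 1)) :=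
  (entropy_equiv μ (Fin.snocEquiv (fun _ : Fin (n + 1) => α)) _ _ (snoc_pref X n)).symm

theorem entropy_pair_succ (μ : Measure Ω) {α β : Type*} [Fintype α] [Fintype β]
    (A : Ω → β) (X : ℕ → Ω → α) (n : ℕ) :
    entropy μ (fun ω => ((A ω, X (n + 1) ω), pref X n ω))
      = entropy μ (fun ω => (A ω, pref X (n + 1) ω)) :=
  (entropy_equiv μ ((Equiv.prodAssoc β α (Fin n → α)).trans
    (Equiv.prodCongr (Equiv.refl β) (Fin.snocEquiv (fun _ : Fin (n + 1) => α))))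
    (fun ω => ((A ω, X (n + 1) ω), pref X n ω)) (fun ω => (A ω, pref X (n + 1) ω))
    (fun ω => Prod.ext rfl (snoc_pref X n ω))).symm

theorem condMI_step (μ : Measure Ω) {α β : Type*} [Fintype α] [Fintype β]
    (A : Ω → β) (X : ℕ → Ω → α) (n : ℕ) :
    condMI μ A (X (n + 1)) (pref X n) = entropy μ (fun ω => (A ω, pref X n ω))
      - entropy μ (pref X n) + entropy μ (pref X (n + 1))
      - entropy μ (fun ω => (A ω, pref X (n + 1) ω)) := by
  unfold condMI condEntropy
  rw [entropy_pair_succ, entropy_pref_succ]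
  ring

theorem entropy_pair_zero (μ : Measure Ω) {α β : Type*} [Fintype α] [Fintype β]
    (Y : ℕ → Ω → β) (B : Ω → α) :
    entropy μ (fun ω => (pref Y 0 ω, B ω)) = entropy μ B :=
  (entropy_equiv μ (Equiv.uniqueProd α (Fin 0 → β)) _ _ (fun _ => rfl)).symm

theorem entropy_zero (μ : Measure Ω) [IsProbabilityMeasure μ] {α : Type*} [Fintype α]
    (X : ℕ → Ω → α) : entropy μ (pref X 0) = 0 := by
  unfold entropy
  have : ∀ w, pref X 0 ⁻¹' {w} = Set.univ := by
    intro w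
    ext ω
    simp [Subsingleton.elim (pref X 0 ω) w]
  simp [this]

theorem delayed_eq (μ : Measure Ω) {α β : Type*} [Fintype α] [Fintype β]
    (m : ℕ) (X : ℕ → Ω → α) (Y : ℕ → Ω → β) :
    delayedDI μ m 1 Y X
      = ∑ i ∈ Finset.Icc 1 m, condMI μ (pref Y (i - 1)) (X i) (pref X (i - 1)) := by
  unfold delayedDI
  refine Finset.sum_subset (Finset.Icc_subset_Icc_left (by norm_num)) ?_
  intro i hi hn
  have : i = 1 := by
    simp only [Finset.mem_Icc] at hi hn
    omega
  subst this
  have := condMI_step μ (pref Y 0) X 0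
  rw [entropy_pair_zero, entropy_pair_zero] at this
  change condMI μ (pref Y 0) (X (0 + 1)) (pref X 0) = 0
  rw [this]
  ring

/-- **Massey's conservation law.**
`I(X^m; Y^m) = I(X^m → Y^m) + I(D^1 ∘ Y^m → X^m)`. -/
theorem massey_conservation (μ : Measure Ω) [IsProbabilityMeasure μ]
    (m : ℕ) (X : ℕ → Ω → 𝒳) (Y : ℕ → Ω → 𝒴)
    (hX : ∀ i, Measurable (X i)) (hY : ∀ j, Measurable (Y j)) :
    mutualInfo μ (pref X m) (pref Y m)
      = directedInfo μ m X Y + delayedDI μ m 1 Y X := by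
  rw [delayed_eq]
  unfold directedInfo mutualInfo
  clear hX hY
  induction m with
  | zero => simp [entropy_pair_zero, entropy_zero]
  | succ n ih =>
    rw [Finset.sum_Icc_succ_top (by omega), Finset.sum_Icc_succ_top (by omega)]
    have h1 : condMI μ (pref X (n + 1)) (Y (n + 1)) (pref Y (n + 1 - 1)) = _ :=
      condMI_step μ (pref X (n + 1)) Y n
    have h2 : condMI μ (pref Y (n + 1 - 1)) (X (n + 1)) (pref X (n + 1 - 1)) = _ :=
      condMI_step μ (pref Y n) X n
    rw [h1, h2, entropy_swap μ (pref Y n) (pref X n),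
      entropy_swap μ (pref Y n) (pref X (n + 1))]
    linarith
end

section
/- Let X^m and Y^m be jointly distributed random variables taking values in finite sets. Then the directed information decomposes as I(X^m → Y^m) = I_inst(X^m, Y^m) + I(D^1 ∘ X^m → Y^m), i.e., directed information equals the instantaneous information plus the one-step delayed directed information. -/
open MeasureTheory Finset

variable {Ω : Type*} [MeasurableSpace Ω]

variable {𝒳 𝒴 : Type*} [Fintype 𝒳] [MeasurableSpace 𝒳] [MeasurableSingletonClass 𝒳]
  [Fintype 𝒴] [MeasurableSpace 𝒴] [MeasurableSingletonClass 𝒴]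

theorem entropy_inj (μ : Measure Ω) {α β : Type*} [Fintype α] [Fintype β]
    (W : Ω → α) (V : Ω → β) (f : α → β) (hf : Function.Injective f)
    (h : ∀ ω, V ω = f (W ω)) : entropy μ W = entropy μ V := by
  unfold entropy
  congr 1
  refine Finset.sum_of_injOn f hf.injOn (by simp) ?_ ?_
  · intro b _ hb
    have : V ⁻¹' {b} = ∅ := by
      ext ω
      simp only [Set.mem_preimage, Set.mem_singleton_iff, Set.mem_empty_iff_false, iff_false]
      intro hv
      exact hb ⟨W ω, by simp, by rw [← h, hv]⟩
    simp [this]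
  · intro a _
    have : V ⁻¹' {f a} = W ⁻¹' {a} := by
      ext ω
      simp [h, hf.eq_iff]
    rw [this]

theorem condMI_pref_zero (μ : Measure Ω) {α β γ : Type*} [Fintype α] [Fintype β] [Fintype γ]
    (X : ℕ → Ω → α) (B : Ω → β) (C : Ω → γ) : condMI μ (pref X 0) B C = 0 := by
  unfold condMI condEntropy
  have h1 : entropy μ (fun ω => (pref X 0 ω, C ω)) = entropy μ C :=
    entropy_inj μ _ _ (fun p => p.2)
      (by
        rintro ⟨a, c⟩ ⟨a', c'⟩ h
        exact Prod.ext (Subsingleton.elim (α := Fin 0 → α) _ _) h)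
      (fun ω => rfl)
  have h2 : entropy μ (fun ω => ((pref X 0 ω, B ω), C ω)) = entropy μ (fun ω => (B ω, C ω)) :=
    entropy_inj μ _ _ (fun p => (p.1.2, p.2))
      (by
        rintro ⟨⟨a, d⟩, c⟩ ⟨⟨a', d'⟩, c'⟩ h
        obtain rfl : a = a' := Subsingleton.elim (α := Fin 0 → α) _ _
        simp only [Prod.mk.injEq] at h ⊢
        tauto)
      (fun ω => rfl)
  rw [h1, h2]; ring

theorem pref_succ_snoc {α : Type*} (X : ℕ → Ω → α) (n : ℕ) (ω : Ω) :
    pref X (n + 1) ω = Fin.snoc (α := fun _ => α) (pref X n ω) (X (n + 1) ω) := by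
  ext t
  refine Fin.lastCases ?_ (fun i => ?_) t
  · simp [pref]
  · simp [pref]

theorem condMI_pref_succ (μ : Measure Ω) {α β γ : Type*} [Fintype α] [Fintype β] [Fintype γ]
    (X : ℕ → Ω → α) (B : Ω → β) (C : Ω → γ) (n : ℕ) :
    condMI μ (pref X (n + 1)) B C =
      condMI μ (X (n + 1)) B (fun ω => (pref X n ω, C ω)) + condMI μ (pref X n) B C := by
  unfold condMI condEntropy
  have h1 : entropy μ (fun ω => (X (n + 1) ω, (pref X n ω, C ω))) =
      entropy μ (fun ω => (pref X (n + 1) ω, C ω)) :=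
    entropy_inj μ _ _ (fun p => (Fin.snoc (α := fun _ => α) p.2.1 p.1, p.2.2))
      (by
        rintro ⟨a, b, c⟩ ⟨a', b', c'⟩ h
        simp only [Prod.mk.injEq, Fin.snoc_inj] at h ⊢
        tauto)
      (fun ω => by simp only [pref_succ_snoc])
  have h2 : entropy μ (fun ω => ((X (n + 1) ω, B ω), (pref X n ω, C ω))) =
      entropy μ (fun ω => ((pref X (n + 1) ω, B ω), C ω)) :=
    entropy_inj μ _ _ (fun p => ((Fin.snoc (α := fun _ => α) p.2.1 p.1.1, p.1.2), p.2.2))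
      (by
        rintro ⟨⟨a, d⟩, b, c⟩ ⟨⟨a', d'⟩, b', c'⟩ h
        simp only [Prod.mk.injEq, Fin.snoc_inj] at h ⊢
        tauto)
      (fun ω => by simp only [pref_succ_snoc])
  have h3 : entropy μ (fun ω => (B ω, (pref X n ω, C ω))) =
      entropy μ (fun ω => ((pref X n ω, B ω), C ω)) :=
    entropy_inj μ _ _ (fun p => ((p.2.1, p.1), p.2.2))
      (by
        rintro ⟨a, b, c⟩ ⟨a', b', c'⟩ h
        simp only [Prod.mk.injEq] at h ⊢
        tauto)
      (fun ω => rfl)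
  rw [h1, h2, h3]; ring

/-- Directed information equals the instantaneous information plus the one-step
delayed directed information: `I(X^m → Y^m) = I_inst(X^m, Y^m) + I(D^1 ∘ X^m → Y^m)`. -/
theorem directedInfo_eq_instInfo_add_delayedDI (μ : Measure Ω) [IsProbabilityMeasure μ]
    (m : ℕ) (X : ℕ → Ω → 𝒳) (Y : ℕ → Ω → 𝒴)
    (hX : ∀ i, Measurable (X i)) (hY : ∀ j, Measurable (Y j)) :
    directedInfo μ m X Y = instInfo μ m X Y + delayedDI μ m 1 X Y := by
  have h : delayedDI μ m 1 X Y =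
      ∑ i ∈ Finset.Icc 1 m, condMI μ (pref X (i - 1)) (Y i) (pref Y (i - 1)) := by
    unfold delayedDI
    refine Finset.sum_subset (Finset.Icc_subset_Icc_left (by norm_num)) ?_
    intro i hi hi'
    simp only [Finset.mem_Icc] at hi hi'
    obtain rfl : i = 1 := by omega
    exact condMI_pref_zero μ X _ _
  rw [h]
  unfold directedInfo instInfo infoMat
  rw [← Finset.sum_add_distrib]
  refine Finset.sum_congr rfl fun i hi => ?_
  obtain ⟨n, rfl⟩ : ∃ n, i = n + 1 := ⟨i - 1, by have := (Finset.mem_Icc.1 hi).1; omega⟩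
  exact condMI_pref_succ μ X _ _ n
end
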